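/- arXiv:2602.11110 — 2 statements merged into one kernel-verified Lean document; each statement's English description precedes it below -/
import Mathlib

section
/- Let k be a field, K/k a field extension, and G an affine group scheme over k. If V and W are finite-dimensional representations of G over k such that V ⊗_k K and W ⊗_k K are isomorphic as representations of G_K over K, then V and W are isomorphic as representations of G over k. -/
/-!
# Statement 0 (Noether–Deuring for representations of affine group schemes)

An affine group scheme `G` over a field `k` is modeled by its commutative Hopf algebra
`A = k[G]`, and a finite-dimensional representation of `G` over `k` by a finite-dimensional
(right) comodule over `A`.  The base change `G_K` then corepresents on `K ⊗[k] V` via the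
base-changed coaction.  The theorem: if `V ⊗_k K` and `W ⊗_k K` are isomorphic as
representations of `G_K` over `K`, then `V` and `W` are isomorphic as representations of `G`.
-/

open scoped TensorProduct

/-- A comodule over a `k`-coalgebra `A`, i.e. a representation of the affine group scheme
`Spec A` when `A` is a commutative Hopf algebra over `k`. -/
structure CoalgebraComodule (k A V : Type*) [CommRing k]
    [AddCommGroup A] [Module k A] [Coalgebra k A]
    [AddCommGroup V] [Module k V] where
  /-- the coaction map -/
  ρ : V →ₗ[k] V ⊗[k] A
  counit_comp : ∀ v : V,
    (TensorProduct.rid k V)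
      ((TensorProduct.map (LinearMap.id : V →ₗ[k] V) (Coalgebra.counit : A →ₗ[k] k)) (ρ v)) = v
  coassoc : ∀ v : V,
    (TensorProduct.assoc k V A A)
      ((TensorProduct.map ρ (LinearMap.id : A →ₗ[k] A)) (ρ v))
      = (TensorProduct.map (LinearMap.id : V →ₗ[k] V)
          (Coalgebra.comul : A →ₗ[k] A ⊗[k] A)) (ρ v)

/-- The base change to `K` of a coaction `ρ : V →ₗ[k] V ⊗[k] A`: the coaction of the
base-changed group scheme `G_K` on `K ⊗[k] V`, a comodule over `K ⊗[k] A`. -/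
noncomputable def baseChangeCoaction (k K A V : Type*) [CommRing k] [CommRing K] [Algebra k K]
    [AddCommGroup A] [Module k A] [AddCommGroup V] [Module k V]
    (ρ : V →ₗ[k] V ⊗[k] A) :
    (K ⊗[k] V) →ₗ[K] (K ⊗[k] V) ⊗[K] (K ⊗[k] A) :=
  (TensorProduct.AlgebraTensorModule.cancelBaseChange k K K (K ⊗[k] V) A).symm.toLinearMap ∘ₗ
    (TensorProduct.AlgebraTensorModule.assoc k k K K V A).symm.toLinearMap ∘ₗ
      ρ.baseChange K

open Module

section

variable {k : Type*} [Field k] {A : Type*} [AddCommGroup A] [Module k A]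
  {V W W' : Type*} [AddCommGroup V] [Module k V] [AddCommGroup W] [Module k W]
  [AddCommGroup W'] [Module k W']

/-- The failure of a linear map to commute with two coactions. -/
noncomputable def coactionDefect (ρV : V →ₗ[k] V ⊗[k] A) (ρW : W →ₗ[k] W ⊗[k] A) :
    (V →ₗ[k] W) →ₗ[k] V →ₗ[k] W ⊗[k] A :=
  LinearMap.llcomp k V W (W ⊗[k] A) ρW - LinearMap.lcomp k (W ⊗[k] A) ρV ∘ₗ LinearMap.rTensorHom A

@[simp]
lemma coactionDefect_apply (ρV : V →ₗ[k] V ⊗[k] A) (ρW : W →ₗ[k] W ⊗[k] A)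
    (f : V →ₗ[k] W) (v : V) :
    coactionDefect ρV ρW f v = ρW (f v) - f.rTensor A (ρV v) := rfl

/-- The linear maps commuting with two coactions and vanishing on a given subspace. -/
noncomputable def intertwiners (ρV : V →ₗ[k] V ⊗[k] A) (ρW : W →ₗ[k] W ⊗[k] A)
    (Y : Submodule k V) : Submodule k (V →ₗ[k] W) :=
  LinearMap.ker (coactionDefect ρV ρW) ⊓ LinearMap.ker (LinearMap.lcomp k W Y.subtype)

lemma mem_intertwiners {ρV : V →ₗ[k] V ⊗[k] A} {ρW : W →ₗ[k] W ⊗[k] A}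
    {Y : Submodule k V} {f : V →ₗ[k] W} :
    f ∈ intertwiners ρV ρW Y ↔
      (∀ v, ρW (f v) = f.rTensor A (ρV v)) ∧ Y ≤ LinearMap.ker f := by
  simp [intertwiners, LinearMap.ext_iff, sub_eq_zero, SetLike.le_def]

variable (K : Type*) [Field K] [Algebra k K]

lemma baseChangeCoaction_apply (ρ : V →ₗ[k] V ⊗[k] A) (x : K ⊗[k] V) :
    baseChangeCoaction k K A V ρ x =
      TensorProduct.AlgebraTensorModule.distribBaseChange k K V A (ρ.baseChange K x) := rfl

lemma map_baseChange_distribBaseChange (f : V →ₗ[k] W) (x : K ⊗[k] (V ⊗[k] A)) :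
    TensorProduct.map (f.baseChange K) (LinearMap.id : (K ⊗[k] A) →ₗ[K] K ⊗[k] A)
        (TensorProduct.AlgebraTensorModule.distribBaseChange k K V A x) =
      TensorProduct.AlgebraTensorModule.distribBaseChange k K W A
        ((f.rTensor A).baseChange K x) := by
  induction x with
  | zero => simp
  | add x y hx hy => simp only [map_add, hx, hy]
  | tmul a y =>
    induction y with
    | zero => simp
    | add x y hx hy => simp only [map_add, TensorProduct.tmul_add, hx, hy]
    | tmul v b => simp

lemma TensorProduct.equivFinsuppOfBasisLeft_lTensor {ι : Type*} [DecidableEq ι] (b : Basis ι k K)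
    (g : V →ₗ[k] W) (t : K ⊗[k] V) (i : ι) :
    TensorProduct.equivFinsuppOfBasisLeft b (g.lTensor K t) i =
      g (TensorProduct.equivFinsuppOfBasisLeft b t i) := by
  induction t with
  | zero => simp
  | add x y hx hy => simp only [map_add, hx, hy, Finsupp.add_apply]
  | tmul a y => simp

variable [FiniteDimensional k V]

/-- Linear maps between base-changed spaces are the base change of the space of linear maps. -/
noncomputable def homBaseChangeEquiv (V W : Type*) [AddCommGroup V] [Module k V]
    [AddCommGroup W] [Module k W] [FiniteDimensional k V] :
    K ⊗[k] (V →ₗ[k] W) ≃ₗ[K] (K ⊗[k] V →ₗ[K] K ⊗[k] W) :=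
  have := Module.finitePresentation_of_finite k V
  (Module.FinitePresentation.isBaseChange_map k V W K).equiv

@[simp]
lemma homBaseChangeEquiv_tmul (a : K) (f : V →ₗ[k] W) :
    homBaseChangeEquiv K V W (a ⊗ₜ f) = a • f.baseChange K :=
  have := Module.finitePresentation_of_finite k V
  (Module.FinitePresentation.isBaseChange_map k V W K).equiv_tmul a f

lemma homBaseChangeEquiv_apply_one_tmul (t : K ⊗[k] (V →ₗ[k] W)) (v : V) :
    homBaseChangeEquiv K V W t (1 ⊗ₜ v) = (LinearMap.applyₗ v).lTensor K t := by
  induction t with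
  | zero => simp
  | add x y hx hy => simp only [map_add, hx, hy, LinearMap.add_apply]
  | tmul a f => simp [TensorProduct.smul_tmul']

lemma baseChangeCoaction_homBaseChangeEquiv (ρV : V →ₗ[k] V ⊗[k] A) (ρW : W →ₗ[k] W ⊗[k] A)
    (t : K ⊗[k] (V →ₗ[k] W)) (v : V) :
    baseChangeCoaction k K A W ρW (homBaseChangeEquiv K V W t (1 ⊗ₜ v)) -
        TensorProduct.map (homBaseChangeEquiv K V W t)
          (LinearMap.id : (K ⊗[k] A) →ₗ[K] K ⊗[k] A)
          (baseChangeCoaction k K A V ρV (1 ⊗ₜ v)) =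
      TensorProduct.AlgebraTensorModule.distribBaseChange k K W A
        ((LinearMap.applyₗ v ∘ₗ coactionDefect ρV ρW).lTensor K t) := by
  induction t with
  | zero => simp
  | add x y hx hy =>
    simp only [map_add, LinearMap.add_apply, TensorProduct.map_add_left, ← hx, ← hy]
    abel
  | tmul a f =>
    simp only [homBaseChangeEquiv_tmul, TensorProduct.map_smul_left, LinearMap.smul_apply,
      baseChangeCoaction_apply, map_baseChange_distribBaseChange, map_smul]
    simp only [LinearMap.baseChange_tmul, LinearMap.lTensor_tmul, LinearMap.comp_apply,
      LinearMap.applyₗ_apply_apply, coactionDefect_apply, TensorProduct.tmul_sub, map_sub,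
      ← map_smul, TensorProduct.smul_tmul', smul_eq_mul, mul_one]

lemma mem_span_baseChange_intertwiners {ρV : V →ₗ[k] V ⊗[k] A} {ρW : W →ₗ[k] W ⊗[k] A}
    {Y : Submodule k V} {ι : Type*} [Fintype ι] (w : Basis ι k (intertwiners ρV ρW Y))
    (F : K ⊗[k] V →ₗ[K] K ⊗[k] W)
    (hF : ∀ x, baseChangeCoaction k K A W ρW (F x) =
      TensorProduct.map F (LinearMap.id : (K ⊗[k] A) →ₗ[K] K ⊗[k] A)
        (baseChangeCoaction k K A V ρV x))
    (hY : ∀ y ∈ Y, F (1 ⊗ₜ y) = 0) :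
    F ∈ Submodule.span K (Set.range fun j => (w j : V →ₗ[k] W).baseChange K) := by
  classical
  obtain ⟨t, rfl⟩ := (homBaseChangeEquiv K V W).surjective F
  let b := Basis.ofVectorSpace k K
  have mem (i) : TensorProduct.equivFinsuppOfBasisLeft b t i ∈ intertwiners ρV ρW Y := by
    rw [mem_intertwiners]
    refine ⟨fun v => ?_, fun y hy => ?_⟩
    · have h := baseChangeCoaction_homBaseChangeEquiv K ρV ρW t v
      rw [hF, sub_self, eq_comm, LinearEquiv.map_eq_zero_iff] at h
      have := TensorProduct.equivFinsuppOfBasisLeft_lTensor K b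
        (LinearMap.applyₗ v ∘ₗ coactionDefect ρV ρW) t i
      rw [h] at this
      exact sub_eq_zero.1 (by simpa using this.symm)
    · have h := homBaseChangeEquiv_apply_one_tmul K t y
      rw [hY y hy] at h
      have := TensorProduct.equivFinsuppOfBasisLeft_lTensor K b
        (LinearMap.applyₗ y : (V →ₗ[k] W) →ₗ[k] W) t i
      rw [← h] at this
      simpa [eq_comm] using this
  rw [← (TensorProduct.equivFinsuppOfBasisLeft b).symm_apply_apply t,
    TensorProduct.equivFinsuppOfBasisLeft_symm_apply, Finsupp.sum, map_sum]
  refine Submodule.sum_mem _ fun i _ => ?_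
  rw [homBaseChangeEquiv_tmul]
  refine Submodule.smul_mem _ _ ?_
  have h := congrArg (fun f : intertwiners ρV ρW Y => (f : V →ₗ[k] W).baseChange K) (w.sum_repr ⟨_, mem i⟩)
  simp only [AddSubmonoidClass.coe_finsetSum, Submodule.coe_smul] at h
  rw [← h, ← LinearMap.baseChangeHom_apply, map_sum]
  refine Submodule.sum_mem _ fun j _ => ?_
  rw [map_smul]
  exact Submodule.smul_of_tower_mem _ _ (Submodule.subset_span ⟨j, rfl⟩)

lemma finrank_intertwiners_le [FiniteDimensional k W] [FiniteDimensional k W']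
    {ρV : V →ₗ[k] V ⊗[k] A} {ρW : W →ₗ[k] W ⊗[k] A} {ρW' : W' →ₗ[k] W' ⊗[k] A}
    (φ : (K ⊗[k] W) ≃ₗ[K] (K ⊗[k] W'))
    (hφ : ∀ x, baseChangeCoaction k K A W' ρW' (φ x) =
      TensorProduct.map (φ : (K ⊗[k] W) →ₗ[K] K ⊗[k] W')
        (LinearMap.id : (K ⊗[k] A) →ₗ[K] K ⊗[k] A) (baseChangeCoaction k K A W ρW x))
    (Y : Submodule k V) :
    finrank k (intertwiners ρV ρW Y) ≤ finrank k (intertwiners ρV ρW' Y) := by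
  let u := finBasis k (intertwiners ρV ρW Y)
  let w := finBasis k (intertwiners ρV ρW' Y)
  have hu : LinearIndependent k fun i => (u i : V →ₗ[k] W) :=
    u.linearIndependent.map' (Submodule.subtype _) (Submodule.ker_subtype _)
  have hli : LinearIndependent K
      fun i => (φ : (K ⊗[k] W) →ₗ[K] K ⊗[k] W') ∘ₗ (u i : V →ₗ[k] W).baseChange K := by
    let e : (K ⊗[k] V →ₗ[K] K ⊗[k] W) ≃ₗ[K] (K ⊗[k] V →ₗ[K] K ⊗[k] W') :=
      (LinearEquiv.refl K (K ⊗[k] V)).arrowCongr φ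
    have h := (Module.Flat.linearIndependent_one_tmul (S := K) hu).map_injOn
      ((homBaseChangeEquiv K V W).trans e).toLinearMap
      ((homBaseChangeEquiv K V W).trans e).injective.injOn
    convert h using 2 with i
    ext; simp [e]
  have hmem (i) : (φ : (K ⊗[k] W) →ₗ[K] K ⊗[k] W') ∘ₗ (u i : V →ₗ[k] W).baseChange K ∈
      Submodule.span K (Set.range fun j => (w j : V →ₗ[k] W').baseChange K) := by
    have hi := mem_intertwiners.1 (u i).2
    refine mem_span_baseChange_intertwiners K w _ (fun x => ?_) fun y hy => ?_
    · have hx : baseChangeCoaction k K A W ρW ((u i : V →ₗ[k] W).baseChange K x) =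
          TensorProduct.map ((u i : V →ₗ[k] W).baseChange K) LinearMap.id
            (baseChangeCoaction k K A V ρV x) := by
        rw [baseChangeCoaction_apply, baseChangeCoaction_apply, map_baseChange_distribBaseChange,
          ← LinearMap.comp_apply, ← LinearMap.comp_apply, ← LinearMap.baseChange_comp,
          ← LinearMap.baseChange_comp, show ρW ∘ₗ (u i : V →ₗ[k] W) = (u i : V →ₗ[k] W).rTensor A ∘ₗ ρV from LinearMap.ext hi.1]
      rw [LinearMap.comp_apply, LinearEquiv.coe_coe, hφ, hx, ← LinearMap.comp_apply,
        ← TensorProduct.map_comp, LinearMap.id_comp]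
    · have : (u i : V →ₗ[k] W) y = 0 := hi.2 hy
      simp [this]
  classical
  have h := linearIndependent_le_span_aux' _ hli _ (Set.range_subset_iff.2 hmem)
  simpa using h.trans (Fintype.card_range_le _)

end

lemma card_le_eq_card_fiber_add_sum {γ P : Type*} [Fintype γ] [PartialOrder P] [Fintype P]
    [DecidableEq P] [DecidableLE P] [DecidableLT P] (q : γ → P) (y : P) :
    Fintype.card {c // y ≤ q c} =
      Fintype.card {c // q c = y} + ∑ z with y < z, Fintype.card {c // q c = z} := by
  simp only [Fintype.card_subtype]
  rw [Finset.card_eq_sum_card_fiberwise (f := q) (t := {z | y ≤ z}) (fun c hc => by simpa using hc),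
    ← Finset.add_sum_erase _ _ (show y ∈ ({z | y ≤ z} : Finset P) by simp)]
  congr 1
  · congr 1
    ext c
    simp only [Finset.mem_filter, Finset.mem_univ, true_and]
    exact ⟨fun h => h.2, fun h => ⟨h.ge, h⟩⟩
  · refine Finset.sum_congr ?_ fun z hz => ?_
    · ext z
      simp [lt_iff_le_and_ne, and_comm, ne_comm]
    · congr 1
      ext c
      simp only [Finset.mem_filter, Finset.mem_univ, true_and, and_iff_right_iff_imp] at hz ⊢
      rintro rfl
      exact hz.le

/-- Functions into a finite poset whose preimages of upper sets `Set.Ici y` have equal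
cardinalities have fibers of equal cardinalities. -/
lemma card_fiber_eq_of_card_le_eq {α β P : Type*} [Fintype α] [Fintype β] [PartialOrder P]
    [Fintype P] [DecidableEq P] [DecidableLE P] [DecidableLT P] (f : α → P) (g : β → P)
    (h : ∀ y, Fintype.card {a // y ≤ f a} = Fintype.card {b // y ≤ g b}) (y : P) :
    Fintype.card {a // f a = y} = Fintype.card {b // g b = y} := by
  induction y using WellFoundedGT.induction with
  | ind y ih =>
    have := h y
    rw [card_le_eq_card_fiber_add_sum f, card_le_eq_card_fiber_add_sum g,
      Finset.sum_congr rfl fun z hz => ih z (by simpa using hz)] at this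
    exact Nat.add_right_cancel this

section

variable {k : Type*} [Field k] {A : Type*} [AddCommGroup A] [Module k A]
  {V W : Type*} [AddCommGroup V] [Module k V] [AddCommGroup W] [Module k W]

/-- Over a finite field, the number of intertwiners vanishing on each subspace determines whether
an injective intertwiner exists. -/
lemma exists_injective_intertwiner_of_finite [Finite k] [FiniteDimensional k V]
    [FiniteDimensional k W] {ρV : V →ₗ[k] V ⊗[k] A} {ρW : W →ₗ[k] W ⊗[k] A}
    (h : ∀ Y, finrank k (intertwiners ρV ρV Y) = finrank k (intertwiners ρV ρW Y)) :
    ∃ f ∈ intertwiners ρV ρW ⊥, Function.Injective f := by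
  classical
  have : Finite V := Module.finite_of_finite k
  have : Finite W := Module.finite_of_finite k
  have : Finite (V →ₗ[k] V) := Module.finite_of_finite k
  have : Finite (V →ₗ[k] W) := Module.finite_of_finite k
  have : Fintype (Submodule k V) := Fintype.ofFinite _
  have := Fintype.ofFinite (intertwiners ρV ρV ⊥)
  have := Fintype.ofFinite (intertwiners ρV ρW ⊥)
  have key := card_fiber_eq_of_card_le_eq
    (fun f : intertwiners ρV ρV ⊥ => LinearMap.ker f.1)
    (fun f : intertwiners ρV ρW ⊥ => LinearMap.ker f.1) (fun Y => by
      rw [← Nat.card_eq_fintype_card, ← Nat.card_eq_fintype_card]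
      let e₁ : {f : intertwiners ρV ρV ⊥ // Y ≤ LinearMap.ker f.1} ≃ intertwiners ρV ρV Y :=
        (Equiv.subtypeSubtypeEquivSubtypeInter (· ∈ intertwiners ρV ρV ⊥)
          (Y ≤ LinearMap.ker ·)).trans
          (Equiv.subtypeEquivRight fun f => by simp [mem_intertwiners])
      let e₂ : {f : intertwiners ρV ρW ⊥ // Y ≤ LinearMap.ker f.1} ≃ intertwiners ρV ρW Y :=
        (Equiv.subtypeSubtypeEquivSubtypeInter (· ∈ intertwiners ρV ρW ⊥)
          (Y ≤ LinearMap.ker ·)).trans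
          (Equiv.subtypeEquivRight fun f => by simp [mem_intertwiners])
      exact Nat.card_congr
        (e₁.trans ((LinearEquiv.ofFinrankEq _ _ (h Y)).toEquiv.trans e₂.symm))) ⊥
  have hid : 0 < Fintype.card {f : intertwiners ρV ρV ⊥ // LinearMap.ker f.1 = ⊥} :=
    Fintype.card_pos_iff.2 ⟨⟨⟨LinearMap.id, by simp [mem_intertwiners]⟩, by simp⟩⟩
  rw [key, Fintype.card_pos_iff] at hid
  obtain ⟨f⟩ := hid
  exact ⟨f.1.1, f.1.2, LinearMap.ker_eq_bot.1 f.2⟩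

/-- Over an infinite field, if some combination of base-changed linear maps with coefficients in an
extension is bijective, then some combination with coefficients in the field itself is injective. -/
lemma exists_injective_sum_smul_of_infinite [Infinite k] {K : Type*} [Field K] [Algebra k K]
    [FiniteDimensional k V] [FiniteDimensional k W] {ι : Type*} [Fintype ι]
    (w : ι → V →ₗ[k] W) (φ : (K ⊗[k] V) ≃ₗ[K] (K ⊗[k] W)) (c : ι → K)
    (hc : ∑ i, c i • (w i).baseChange K = φ) :
    ∃ x : ι → k, Function.Injective (∑ i, x i • w i : V →ₗ[k] W) := by
  classical
  have hrank : finrank k V = finrank k W := by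
    rw [← finrank_baseChange (R := K), φ.finrank_eq, finrank_baseChange]
  let bV := finBasis k V
  let bW := (finBasis k W).reindex (finCongr hrank.symm)
  let P : MvPolynomial ι k := Matrix.det
    (∑ i, (MvPolynomial.X i : MvPolynomial ι k) • (LinearMap.toMatrix bV bW (w i)).map MvPolynomial.C)
  have hP : MvPolynomial.aeval c P ≠ 0 := by
    have h : MvPolynomial.aeval c P =
        (LinearMap.toMatrix (Algebra.TensorProduct.basis K bV)
          (Algebra.TensorProduct.basis K bW) (φ : _ →ₗ[K] _)).det := by
      rw [← hc, AlgHom.map_det, map_sum]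
      congr 1
      ext a b
      simp [Matrix.sum_apply, LinearMap.toMatrix_baseChange]
    rw [h]
    exact (LinearEquiv.isUnit_det φ _ _).ne_zero
  obtain ⟨x, hx⟩ : ∃ x, MvPolynomial.eval x P ≠ 0 := by
    by_contra! h
    exact hP (by rw [MvPolynomial.funext (p := P) (q := 0) (by simpa using h), map_zero])
  have h : MvPolynomial.eval x P = (LinearMap.toMatrix bV bW (∑ i, x i • w i)).det := by
    rw [RingHom.map_det, map_sum]
    congr 1
    ext a b
    simp [Matrix.sum_apply]
  exact ⟨x, (LinearEquiv.ofIsUnitDet (h ▸ hx.isUnit : IsUnit _)).injective⟩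

end

/-- **Noether–Deuring for affine group schemes.**  If `V ⊗_k K ≅ W ⊗_k K` as representations of
`G_K` over `K`, then `V ≅ W` as representations of `G` over `k`. -/
theorem isomorphic_of_baseChange_isomorphic
    (k K : Type*) [Field k] [Field K] [Algebra k K]
    (A : Type*) [CommRing A] [HopfAlgebra k A]
    (V W : Type*) [AddCommGroup V] [Module k V] [FiniteDimensional k V]
    [AddCommGroup W] [Module k W] [FiniteDimensional k W]
    (ρV : CoalgebraComodule k A V) (ρW : CoalgebraComodule k A W)
    (h : ∃ φ : (K ⊗[k] V) ≃ₗ[K] (K ⊗[k] W), ∀ x : K ⊗[k] V,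
      baseChangeCoaction k K A W ρW.ρ (φ x)
        = TensorProduct.map (φ : (K ⊗[k] V) →ₗ[K] K ⊗[k] W)
            (LinearMap.id : (K ⊗[k] A) →ₗ[K] K ⊗[k] A)
            (baseChangeCoaction k K A V ρV.ρ x)) :
    ∃ ψ : V ≃ₗ[k] W, ∀ v : V,
      ρW.ρ (ψ v)
        = TensorProduct.map (ψ : V →ₗ[k] W) (LinearMap.id : A →ₗ[k] A) (ρV.ρ v) := by
  obtain ⟨φ, hφ⟩ := h
  obtain ⟨f, hf, hinj⟩ : ∃ f ∈ intertwiners ρV.ρ ρW.ρ ⊥, Function.Injective f := by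
    rcases finite_or_infinite k with _ | _
    · refine exists_injective_intertwiner_of_finite fun Y =>
        le_antisymm (finrank_intertwiners_le K φ hφ Y)
          (finrank_intertwiners_le K φ.symm (fun x => ?_) Y)
      obtain ⟨x, rfl⟩ := φ.surjective x
      rw [hφ, ← LinearMap.comp_apply, ← TensorProduct.map_comp]
      simp
    · let w := finBasis k (intertwiners ρV.ρ ρW.ρ ⊥)
      obtain ⟨c, hc⟩ := (Submodule.mem_span_range_iff_exists_fun K).1
        (mem_span_baseChange_intertwiners K w (φ : (K ⊗[k] V) →ₗ[K] K ⊗[k] W) hφ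
          (fun y hy => by simp [(Submodule.mem_bot k).1 hy]))
      obtain ⟨x, hx⟩ := exists_injective_sum_smul_of_infinite (fun i => (w i).1) φ c hc
      exact ⟨_, Submodule.sum_mem _ fun i _ => Submodule.smul_mem _ _ (w i).2, hx⟩
  have hrank : finrank k V = finrank k W := by
    rw [← finrank_baseChange (R := K), φ.finrank_eq, finrank_baseChange]
  refine ⟨LinearEquiv.ofInjectiveOfFinrankEq f hinj hrank, fun v => ?_⟩
  exact (mem_intertwiners.1 hf).1 v
end

section
/- Let k be a field, K/k a field extension, and G an affine group scheme over k. Then for any finite-dimensional representation V of G_K over K, there exists a finite-dimensional representation W of G over k and an injective morphism of G_K-representations V ↪ W ⊗_k K. -/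
/-!
# Statement 2 (Representations of `G_K` embed into base changes of representations of `G`)

An affine group scheme `G` over a field `k` is modeled by its commutative Hopf algebra
`A = k[G]`; representations of `G` are comodules over `A`, and representations of the base
change `G_K` are comodules over the base-changed Hopf algebra `K ⊗[k] A` over `K`.
The theorem: every finite-dimensional representation `V` of `G_K` over `K` admits an injective
morphism of `G_K`-representations `V ↪ W ⊗_k K` for some finite-dimensional representation `W`
of `G` over `k`.
-/

open scoped TensorProduct

/-- The comultiplication of the base-changed coalgebra `K ⊗[k] A` over `K`. -/
noncomputable def bcComul (k K A : Type*) [CommRing k] [CommRing K] [Algebra k K]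
    [AddCommGroup A] [Module k A] [Coalgebra k A] :
    (K ⊗[k] A) →ₗ[K] (K ⊗[k] A) ⊗[K] (K ⊗[k] A) :=
  baseChangeCoaction k K A A (Coalgebra.comul : A →ₗ[k] A ⊗[k] A)

/-- The counit of the base-changed coalgebra `K ⊗[k] A` over `K`. -/
noncomputable def bcCounit (k K A : Type*) [CommRing k] [CommRing K] [Algebra k K]
    [AddCommGroup A] [Module k A] [Coalgebra k A] :
    (K ⊗[k] A) →ₗ[K] K :=
  (TensorProduct.AlgebraTensorModule.rid k K K).toLinearMap ∘ₗ
    (Coalgebra.counit : A →ₗ[k] k).baseChange K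

/-- A comodule over the base-changed coalgebra `K ⊗[k] A`, i.e. a representation over `K`
of the base-changed affine group scheme `G_K`. -/
structure BaseChangeComodule (k K A : Type*) [CommRing k] [CommRing K] [Algebra k K]
    [AddCommGroup A] [Module k A] [Coalgebra k A]
    (V : Type*) [AddCommGroup V] [Module K V] where
  /-- the coaction map -/
  ρ : V →ₗ[K] V ⊗[K] (K ⊗[k] A)
  counit_comp : ∀ v : V,
    (TensorProduct.rid K V)
      ((TensorProduct.map (LinearMap.id : V →ₗ[K] V) (bcCounit k K A)) (ρ v)) = v
  coassoc : ∀ v : V,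
    (TensorProduct.assoc K V (K ⊗[k] A) (K ⊗[k] A))
      ((TensorProduct.map ρ (LinearMap.id : (K ⊗[k] A) →ₗ[K] K ⊗[k] A)) (ρ v))
      = (TensorProduct.map (LinearMap.id : V →ₗ[K] V) (bcComul k K A)) (ρ v)

open TensorProduct LinearMap

universe w

theorem tensorProduct_map_id_injective {R M N Q : Type*} [Field R] [AddCommGroup M] [Module R M]
    [AddCommGroup N] [Module R N] [AddCommGroup Q] [Module R Q] {f : M →ₗ[R] N}
    (hf : Function.Injective f) :
    Function.Injective (TensorProduct.map f (id : Q →ₗ[R] Q)) :=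
  Module.Flat.rTensor_preserves_injective_linearMap f hf

theorem exists_comp_eq_of_range_le {R M N Q : Type*} [Field R] [AddCommGroup M] [Module R M]
    [AddCommGroup N] [Module R N] [AddCommGroup Q] [Module R Q] {f : M →ₗ[R] N}
    (hf : Function.Injective f) (h : Q →ₗ[R] N) (hr : ∀ q, h q ∈ range f) :
    ∃ g : Q →ₗ[R] M, ∀ q, f (g q) = h q := by
  obtain ⟨l, hl⟩ := f.exists_leftInverse_of_injective (ker_eq_bot.2 hf)
  refine ⟨l ∘ₗ h, fun q => ?_⟩
  obtain ⟨m, hm⟩ := hr q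
  rw [LinearMap.comp_apply, ← hm, ← LinearMap.comp_apply l, hl, id_apply]

namespace CoalgebraComodule

variable {k A P W : Type*} [Field k] [AddCommGroup A] [Module k A]
  [AddCommGroup P] [Module k P] [AddCommGroup W] [Module k W]

/-- A tensor all of whose slices lie in a subspace `N` comes from `N ⊗ A`. -/
theorem mem_range_map_subtype_of_slices (N : Submodule k P) (t : P ⊗[k] A)
    (h : ∀ φ : A →ₗ[k] k, TensorProduct.rid k P (TensorProduct.map id φ t) ∈ N) :
    t ∈ range (TensorProduct.map N.subtype (id : A →ₗ[k] A)) := by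
  let b := Module.Basis.ofVectorSpace k A
  obtain ⟨c, rfl⟩ := TensorProduct.eq_repr_basis_right b t
  refine Submodule.sum_mem _ fun i _ => ?_
  have hi : c i ∈ N := by
    classical
    have := h (b.coord i)
    simp only [Finsupp.sum, map_sum, map_tmul, id_coe, id_eq, Module.Basis.coord_apply,
      Module.Basis.repr_self, Finsupp.single_apply, rid_tmul, ite_smul, one_smul, zero_smul,
      Finset.sum_ite_eq', Finsupp.mem_support_iff] at this
    by_cases hc : c i = 0 <;> simp_all
  exact ⟨⟨c i, hi⟩ ⊗ₜ b i, by simp⟩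

theorem sum_map_single_comp_proj_single (r : P →ₗ[k] P ⊗[k] A) {ι : Type*} [Fintype ι]
    [DecidableEq ι] (i : ι) (p : P) :
    (∑ j, TensorProduct.map (single k (fun _ => P) j) (id : A →ₗ[k] A) ∘ₗ r ∘ₗ proj j)
      (single k (fun _ => P) i p) = TensorProduct.map (single k (fun _ => P) i) id (r p) := by
  rw [LinearMap.sum_apply, Finset.sum_eq_single i]
  · simp
  · intro j _ hj
    simp [Pi.single_eq_of_ne hj]
  · simp

variable [Coalgebra k A]

/-- Local finiteness of comodules: every finite-dimensional subspace of a comodule is contained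
in a finite-dimensional subcomodule. -/
theorem exists_finiteDimensional_subcomodule (c : CoalgebraComodule k A P) (S : Submodule k P)
    [FiniteDimensional k S] :
    ∃ N : Submodule k P, FiniteDimensional k N ∧ S ≤ N ∧
      ∀ p ∈ N, c.ρ p ∈ range (TensorProduct.map N.subtype (id : A →ₗ[k] A)) := by
  obtain ⟨s, rfl⟩ := (Module.Finite.iff_fg (N := S)).1 inferInstance
  obtain ⟨M, hM, hsM⟩ := TensorProduct.exists_finite_submodule_left_of_setFinite
    (c.ρ '' s) (s.finite_toSet.image _)
  have hNM : (range (M.subtype.rTensor A)).comap c.ρ ≤ M := by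
    rintro p ⟨t, ht⟩
    rw [← c.counit_comp p, ← ht]
    clear ht
    induction t with
    | zero => simp
    | add x y hx hy => simpa using M.add_mem hx hy
    | tmul m a => simpa using M.smul_mem _ m.2
  refine ⟨(range (M.subtype.rTensor A)).comap c.ρ, Submodule.finiteDimensional_of_le hNM,
    Submodule.span_le.2 fun p hp => hsM ⟨p, hp, rfl⟩, ?_⟩
  rintro p ⟨t, ht⟩
  refine mem_range_map_subtype_of_slices _ _ fun φ => ?_
  have key : c.ρ (TensorProduct.rid k P (TensorProduct.map id φ (c.ρ p)))
      = TensorProduct.map id ((TensorProduct.rid k A).toLinearMap ∘ₗ TensorProduct.map id φ ∘ₗ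
          Coalgebra.comul) (c.ρ p) := by
    have h1 : ∀ u : P ⊗[k] A, c.ρ (TensorProduct.rid k P (TensorProduct.map id φ u))
        = TensorProduct.map id ((TensorProduct.rid k A).toLinearMap ∘ₗ TensorProduct.map id φ)
          (TensorProduct.assoc k P A A (TensorProduct.map c.ρ id u)) := by
      intro u
      induction u with
      | zero => simp
      | add x y hx hy => simp only [map_add, hx, hy]
      | tmul q a =>
        simp only [map_tmul, id_coe, id_eq, rid_tmul, map_smul]
        generalize c.ρ q = z
        induction z with
        | zero => simp
        | add x y hx hy => simp only [smul_add, add_tmul, map_add, hx, hy]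
        | tmul x y => simp
    rw [h1, c.coassoc, ← LinearMap.comp_apply, ← TensorProduct.map_comp]
    rfl
  rw [Submodule.mem_comap, key, ← ht]
  refine ⟨TensorProduct.map id ((TensorProduct.rid k A).toLinearMap ∘ₗ TensorProduct.map id φ ∘ₗ
          Coalgebra.comul) t, ?_⟩
  simp only [LinearMap.rTensor, ← LinearMap.comp_apply, ← TensorProduct.map_comp]
  rfl

/-- A comodule structure pulls back along an injection whose image is stable under the coaction. -/
theorem exists_comodule_of_injective (c : CoalgebraComodule k A P) {f : W →ₗ[k] P}
    (hf : Function.Injective f)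
    (hr : ∀ w, c.ρ (f w) ∈ range (TensorProduct.map f (id : A →ₗ[k] A))) :
    ∃ cW : CoalgebraComodule k A W,
      ∀ w, TensorProduct.map f (id : A →ₗ[k] A) (cW.ρ w) = c.ρ (f w) := by
  obtain ⟨r, hr⟩ := exists_comp_eq_of_range_le (tensorProduct_map_id_injective hf) (c.ρ ∘ₗ f) hr
  refine ⟨⟨r, fun w => hf ?_, fun w => tensorProduct_map_id_injective (Q := A ⊗[k] A) hf ?_⟩, hr⟩
  · rw [← c.counit_comp (f w), ← LinearMap.comp_apply c.ρ, ← hr]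
    generalize r w = t
    induction t with
    | zero => simp
    | add x y hx hy => simp only [map_add, hx, hy]
    | tmul x y => simp
  · have hl : ∀ u : W ⊗[k] A, TensorProduct.map f id (TensorProduct.assoc k W A A
        (TensorProduct.map r id u)) =
        TensorProduct.assoc k P A A (TensorProduct.map c.ρ id (TensorProduct.map f id u)) := by
      intro u
      induction u with
      | zero => simp
      | add x y hx hy => simp only [map_add, hx, hy]
      | tmul x y =>
        simp only [map_tmul, id_coe, id_eq]
        rw [← LinearMap.comp_apply c.ρ, ← hr]
        generalize r x = t
        induction t with
        | zero => simp
        | add x y hx hy => simp only [map_add, add_tmul, hx, hy]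
        | tmul x y => simp
    rw [hl, hr, LinearMap.comp_apply, c.coassoc, ← LinearMap.comp_apply c.ρ, ← hr]
    generalize r w = t
    induction t with
    | zero => simp
    | add x y hx hy => simp only [map_add, hx, hy]
    | tmul x y => simp

variable (k A) in
/-- The regular representation. -/
noncomputable def regular : CoalgebraComodule k A A where
  ρ := Coalgebra.comul
  counit_comp v := by
    have := Coalgebra.lTensor_counit_comul (R := k) v
    rw [LinearMap.lTensor] at this
    simp [this]
  coassoc v := Coalgebra.coassoc_apply v

/-- The direct sum of copies of a comodule. -/
noncomputable def pi (c : CoalgebraComodule k A P) (ι : Type*) [Fintype ι] [DecidableEq ι] :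
    CoalgebraComodule k A (ι → P) where
  ρ := ∑ i, TensorProduct.map (single k (fun _ => P) i) id ∘ₗ c.ρ ∘ₗ proj i
  counit_comp v := by
    have h : ∀ (i : ι) (u : P ⊗[k] A), TensorProduct.rid k (ι → P) (TensorProduct.map id
        Coalgebra.counit (TensorProduct.map (single k (fun _ => P) i) id u))
        = single k (fun _ => P) i (TensorProduct.rid k P (TensorProduct.map id
        Coalgebra.counit u)) := by
      intro i u
      induction u with
      | zero => simp
      | add x y hx hy => simp only [map_add, hx, hy]
      | tmul x y => simp
    simp only [LinearMap.sum_apply, LinearMap.comp_apply, map_sum, h, c.counit_comp]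
    exact Finset.univ_sum_single v
  coassoc v := by
    set r : (ι → P) →ₗ[k] (ι → P) ⊗[k] A :=
      ∑ i, TensorProduct.map (single k (fun _ => P) i) id ∘ₗ c.ρ ∘ₗ proj i with hr
    have hs : ∀ i p, r (single k (fun _ => P) i p)
        = TensorProduct.map (single k (fun _ => P) i) id (c.ρ p) :=
      sum_map_single_comp_proj_single c.ρ
    have hl : ∀ (i : ι) (u : P ⊗[k] A), TensorProduct.assoc k (ι → P) A A
        (TensorProduct.map r id (TensorProduct.map (single k (fun _ => P) i) id u))
        = TensorProduct.map (single k (fun _ => P) i) id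
          (TensorProduct.assoc k P A A (TensorProduct.map c.ρ id u)) := by
      intro i u
      induction u with
      | zero => simp
      | add x y hx hy => simp only [map_add, hx, hy]
      | tmul x y =>
        simp only [map_tmul, id_apply, hs]
        generalize c.ρ x = t
        induction t with
        | zero => simp
        | add x y hx hy => simp only [map_add, add_tmul, hx, hy]
        | tmul x y => simp
    have hd : ∀ (i : ι) (u : P ⊗[k] A), TensorProduct.map id (Coalgebra.comul (R := k))
        (TensorProduct.map (single k (fun _ => P) i) id u)
        = TensorProduct.map (single k (fun _ => P) i) id
          (TensorProduct.map id Coalgebra.comul u) := by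
      intro i u
      induction u with
      | zero => simp
      | add x y hx hy => simp only [map_add, hx, hy]
      | tmul x y => simp
    have hv : r v = ∑ i, TensorProduct.map (single k (fun _ => P) i) id (c.ρ (v i)) := by
      simp [hr]
    simp only [hv, map_sum, hl, hd, c.coassoc]

theorem pi_ρ_single (c : CoalgebraComodule k A P) {ι : Type*} [Fintype ι] [DecidableEq ι]
    (i : ι) (p : P) : (c.pi ι).ρ (single k (fun _ => P) i p)
      = TensorProduct.map (single k (fun _ => P) i) id (c.ρ p) :=
  sum_map_single_comp_proj_single c.ρ i p

end CoalgebraComodule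

section BaseChange

variable {k K A : Type*} [Field k] [Field K] [Algebra k K] [AddCommGroup A] [Module k A]

/-- Base change of coactions is natural in equivariant maps. -/
theorem baseChangeCoaction_baseChange {M N : Type*} [AddCommGroup M] [Module k M]
    [AddCommGroup N] [Module k N] {f : M →ₗ[k] N} {ρM : M →ₗ[k] M ⊗[k] A}
    {ρN : N →ₗ[k] N ⊗[k] A}
    (h : ∀ m, ρN (f m) = TensorProduct.map f id (ρM m)) (x : K ⊗[k] M) :
    baseChangeCoaction k K A N ρN (f.baseChange K x)
      = TensorProduct.map (f.baseChange K) id (baseChangeCoaction k K A M ρM x) := by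
  induction x with
  | zero => simp
  | add x y hx hy => simp only [map_add, hx, hy]
  | tmul a m =>
    simp only [baseChangeCoaction, LinearMap.comp_apply, baseChange_tmul, h]
    generalize ρM m = t
    induction t with
    | zero => simp
    | add x y hx hy => simp only [map_add, tmul_add, hx, hy]
    | tmul x y => simp

variable [Coalgebra k A] {V : Type*} [AddCommGroup V] [Module K V]

/-- A representation of `G_K` which embeds equivariantly into the base change of some
representation of `G` embeds into the base change of a finite-dimensional one, which can be taken
in any given universe above that of the original one. -/
theorem exists_finiteDimensional_of_embedding [FiniteDimensional K V]
    (ρ : V →ₗ[K] V ⊗[K] (K ⊗[k] A)) {P : Type*} [AddCommGroup P] [Module k P]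
    (c : CoalgebraComodule k A P) (g : V →ₗ[K] K ⊗[k] P) (hg : Function.Injective g)
    (hρ : ∀ v, baseChangeCoaction k K A P c.ρ (g v) = TensorProduct.map g id (ρ v)) :
    ∃ N : Submodule k P, FiniteDimensional k N ∧
      ∃ (cN : CoalgebraComodule k A (ULift.{w} N)) (g' : V →ₗ[K] K ⊗[k] ULift.{w} N),
        Function.Injective g' ∧
        ∀ v, baseChangeCoaction k K A _ cN.ρ (g' v) = TensorProduct.map g' id (ρ v) := by
  let b := Module.finBasis K V
  obtain ⟨S, hS, hSg⟩ := TensorProduct.exists_finite_submodule_right_of_setFinite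
    (Set.range fun i => g (b i)) (Set.finite_range _)
  obtain ⟨N, hN, hSN, hNρ⟩ := c.exists_finiteDimensional_subcomodule S
  let e : N ≃ₗ[k] ULift.{w} N := ULift.moduleEquiv.symm
  let f : ULift.{w} N →ₗ[k] P := N.subtype ∘ₗ e.symm.toLinearMap
  have hf : Function.Injective f := N.injective_subtype.comp e.symm.injective
  have hfρ : ∀ x, c.ρ (f x) ∈ range (TensorProduct.map f (id : A →ₗ[k] A)) := by
    intro x
    obtain ⟨t, ht⟩ := hNρ _ (e.symm x).2
    refine ⟨TensorProduct.map e.toLinearMap id t, ?_⟩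
    refine Eq.trans ?_ ht
    rw [← LinearMap.comp_apply, ← TensorProduct.map_comp]
    rfl
  obtain ⟨cN, hcN⟩ := c.exists_comodule_of_injective hf hfρ
  have hinj : Function.Injective (f.baseChange K) :=
    Module.Flat.lTensor_preserves_injective_linearMap (M := K) _ hf
  have hr : ∀ v, g v ∈ range (f.baseChange K) := by
    have hb : ∀ i, g (b i) ∈ range (f.baseChange K) := by
      intro i
      obtain ⟨t, ht⟩ := hSg ⟨i, rfl⟩
      refine ⟨(e.toLinearMap ∘ₗ Submodule.inclusion hSN).lTensor K t, ?_⟩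
      refine Eq.trans ?_ ht
      change f.lTensor K _ = _
      rw [← LinearMap.comp_apply, ← lTensor_comp]
      rfl
    intro v
    rw [← b.sum_repr v, map_sum]
    exact Submodule.sum_mem _ fun i _ => by
      rw [map_smul]
      exact Submodule.smul_mem _ _ (hb i)
  obtain ⟨g', hg'⟩ := exists_comp_eq_of_range_le hinj g hr
  refine ⟨N, hN, cN, g', fun x y hxy => hg (by rw [← hg', ← hg', hxy]), fun v => ?_⟩
  refine tensorProduct_map_id_injective hinj ?_
  rw [← baseChangeCoaction_baseChange (fun m => (hcN m).symm), hg', hρ]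
  generalize ρ v = t
  induction t with
  | zero => simp
  | add x y hx hy => simp only [map_add, hx, hy]
  | tmul x y => simp [hg']

/-- Every finite-dimensional representation of `G_K` embeds into the base change of a direct sum
of copies of the regular representation of `G`. -/
theorem exists_embedding_into_pi_regular [FiniteDimensional K V]
    (ρ : BaseChangeComodule k K A V) :
    ∃ g : V →ₗ[K] K ⊗[k] (Fin (Module.finrank K V) → A), Function.Injective g ∧
      ∀ v, baseChangeCoaction k K A _ ((CoalgebraComodule.regular k A).pi _).ρ (g v)
        = TensorProduct.map g id (ρ.ρ v) := by
  let b := Module.finBasis K V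
  let c : Fin (Module.finrank K V) → V →ₗ[K] K ⊗[k] A := fun i =>
    (TensorProduct.lid K (K ⊗[k] A)).toLinearMap ∘ₗ TensorProduct.map (b.coord i) id ∘ₗ ρ.ρ
  have hcounit : ∀ i v, bcCounit k K A (c i v) = b.coord i v := by
    intro i v
    conv_rhs => rw [← ρ.counit_comp v]
    simp only [c, LinearMap.comp_apply]
    generalize ρ.ρ v = t
    induction t with
    | zero => simp
    | add x y hx hy => simp only [map_add, hx, hy]
    | tmul x y => simp [mul_comm]
  have hcomul : ∀ i v, bcComul k K A (c i v) = TensorProduct.map (c i) id (ρ.ρ v) := by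
    intro i v
    have h1 : ∀ t : V ⊗[K] (K ⊗[k] A),
        bcComul k K A (TensorProduct.lid K (K ⊗[k] A) (TensorProduct.map (b.coord i) id t))
        = TensorProduct.lid K _ (TensorProduct.map (b.coord i) id
          (TensorProduct.map id (bcComul k K A) t)) := by
      intro t
      induction t with
      | zero => simp
      | add x y hx hy => simp only [map_add, hx, hy]
      | tmul x y => simp
    have h2 : ∀ t : V ⊗[K] (K ⊗[k] A), TensorProduct.map (c i) id t
        = TensorProduct.lid K _ (TensorProduct.map (b.coord i) id
          (TensorProduct.assoc K V (K ⊗[k] A) (K ⊗[k] A) (TensorProduct.map ρ.ρ id t))) := by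
      intro t
      induction t with
      | zero => simp
      | add x y hx hy => simp only [map_add, hx, hy]
      | tmul x y =>
        simp only [c, LinearMap.comp_apply, map_tmul, id_apply]
        generalize ρ.ρ x = t
        induction t with
        | zero => simp
        | add x y hx hy => simp only [map_add, add_tmul, hx, hy]
        | tmul x y => simp [smul_tmul']
    rw [h2, ρ.coassoc, ← h1]
    rfl
  let s := fun i => (single k (fun _ : Fin (Module.finrank K V) => A) i).baseChange K
  refine ⟨∑ i, s i ∘ₗ c i, ?_, fun v => ?_⟩
  · rw [← ker_eq_bot, eq_bot_iff]
    intro v hv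
    have hc : ∀ j, c j v = 0 := by
      intro j
      have hp : ∀ i (x : K ⊗[k] A), (proj (R := k) (φ := fun _ => A) j).baseChange K (s i x)
          = if i = j then x else 0 := by
        intro i x
        have h3 : (proj (R := k) (φ := fun _ => A) j).baseChange K (s i x)
            = ((proj j ∘ₗ single k (fun _ => A) i : A →ₗ[k] A)).baseChange K x := by
          rw [baseChange_comp]; rfl
        rw [h3]
        split_ifs with hij
        · subst hij
          rw [proj_comp_single_same, baseChange_id]; rfl
        · rw [proj_comp_single_ne k _ _ _ (Ne.symm hij), baseChange_zero]; rfl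
      have := congrArg ((proj (R := k) (φ := fun _ => A) j).baseChange K) (mem_ker.1 hv)
      simpa [LinearMap.sum_apply, map_sum, hp] using this
    refine b.ext_elem fun j => ?_
    have := hcounit j v
    rw [hc, map_zero] at this
    simpa using this.symm
  · have hs : ∀ i x, baseChangeCoaction k K A _ ((CoalgebraComodule.regular k A).pi _).ρ (s i x)
        = TensorProduct.map (s i) id (bcComul k K A x) := fun i x =>
      baseChangeCoaction_baseChange ((CoalgebraComodule.regular k A).pi_ρ_single i) x
    have hsum : ∀ t : V ⊗[K] (K ⊗[k] A), TensorProduct.map (∑ i, s i ∘ₗ c i) id t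
        = ∑ i, TensorProduct.map (s i) id (TensorProduct.map (c i) id t) := by
      intro t
      induction t with
      | zero => simp
      | add x y hx hy => simp only [map_add, hx, hy, Finset.sum_add_distrib]
      | tmul x y => simp [sum_tmul]
    simp only [LinearMap.sum_apply, LinearMap.comp_apply, map_sum, hs, hcomul, hsum]

end BaseChange

/-- Every finite-dimensional representation `V` of `G_K` over `K` embeds, as a representation
of `G_K`, into `W ⊗_k K` for some finite-dimensional representation `W` of `G` over `k`. -/
theorem exists_embedding_into_baseChange
    (k K : Type) [Field k] [Field K] [Algebra k K]
    (A : Type) [CommRing A] [HopfAlgebra k A]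
    (V : Type) [AddCommGroup V] [Module K V] [FiniteDimensional K V]
    (ρ : BaseChangeComodule k K A V) :
    ∃ W : ModuleCat k, FiniteDimensional k W ∧
      ∃ (ρW : CoalgebraComodule k A W) (g : V →ₗ[K] K ⊗[k] W),
        Function.Injective g ∧
        ∀ v : V, baseChangeCoaction k K A W ρW.ρ (g v)
          = TensorProduct.map g (LinearMap.id : (K ⊗[k] A) →ₗ[K] K ⊗[k] A) (ρ.ρ v) := by
  obtain ⟨g, hg, hgρ⟩ := exists_embedding_into_pi_regular ρ
  obtain ⟨N, hN, cN, g', hg', hρ'⟩ := exists_finiteDimensional_of_embedding ρ.ρ _ g hg hgρ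
  exact ⟨ModuleCat.of k (ULift N), inferInstanceAs (FiniteDimensional k (ULift N)),
    cN, g', hg', hρ'⟩
end
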